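/- arXiv:2310.16674 — 6 statements merged into one kernel-verified Lean document; each statement's English description precedes it below -/
import Mathlib

section
/- Let m, n ∈ ℕ and α ∈ ℝ with α + n − m ≠ 0. For every x ∈ ℝ, lim_{β→∞} β^{n+m} P̂^{(II,m)}_n(1 − 2x/β; α, β) = (−2)^{n+m} L̂^{(II,m)}_n(x; α), the limit being taken along real β → +∞ (for all sufficiently large β all occurring polynomials are defined). -/
open Finset Filter Topology

/-- Monic Laguerre polynomial `L_n^{(α)}(x)`. -/
noncomputable def lagP (n : ℕ) (α x : ℝ) : ℝ :=
  ∑ k ∈ Finset.range (n + 1),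
    (-1 : ℝ) ^ (n - k) * ((n.factorial : ℝ) / (k.factorial : ℝ)) *
      ((∏ j ∈ Finset.Icc (k + 1) n, (α + (j : ℝ))) / ((n - k).factorial : ℝ)) * x ^ k

/-- Pochhammer symbol `(a)_n = a (a+1) ⋯ (a+n−1)`. -/
noncomputable def poch (a : ℝ) (n : ℕ) : ℝ := ∏ j ∈ Finset.range n, (a + (j : ℝ))

/-- Monic Jacobi polynomial `P_n^{(α,β)}(x)`. -/
noncomputable def jacP (n : ℕ) (α β x : ℝ) : ℝ :=
  (2 ^ n * (n.factorial : ℝ) / poch ((n : ℝ) + α + β + 1) n) *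
    ∑ s ∈ Finset.range (n + 1),
      ((∏ j ∈ Finset.Icc (s + 1) n, (α + (j : ℝ))) / ((n - s).factorial : ℝ)) *
        ((∏ j ∈ Finset.Icc (n - s + 1) n, (β + (j : ℝ))) / (s.factorial : ℝ)) *
        ((x - 1) / 2) ^ s * ((x + 1) / 2) ^ (n - s)

/-- Monic Hermite polynomial, as a polynomial function on `ℂ`. -/
noncomputable def hermC (n : ℕ) (z : ℂ) : ℂ :=
  ∑ k ∈ Finset.range (n / 2 + 1),
    (-1 : ℂ) ^ k *
      ((n.factorial : ℂ) / ((k.factorial : ℂ) * ((n - 2 * k).factorial : ℂ) * 4 ^ k)) *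
      z ^ (n - 2 * k)

/-- Type I `X_m`-Laguerre exceptional orthogonal polynomial `L̂^{(I,m)}_n(x;α)`. -/
noncomputable def lagI (m n : ℕ) (α x : ℝ) : ℝ :=
  (-1 : ℝ) ^ m * (lagP m (α + 1) (-x) * lagP n α x
    - (n : ℝ) * lagP m α (-x) * lagP (n - 1) (α + 1) x)

/-- Type II `X_m`-Laguerre exceptional orthogonal polynomial `L̂^{(II,m)}_n(x;α)`. -/
noncomputable def lagII (m n : ℕ) (α x : ℝ) : ℝ :=
  (1 / (α + (n : ℝ) - (m : ℝ))) *
    ((n : ℝ) * x * lagP m (-α) x * lagP (n - 1) (α + 1) x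
      - ((m : ℝ) - α) * lagP m (-α - 1) x * lagP n α x)

/-- Type III `X_m`-Laguerre exceptional orthogonal polynomial `L̂^{(III,m)}_n(x;α)`. -/
noncomputable def lagIII (m n : ℕ) (α x : ℝ) : ℝ :=
  if n = 0 then 1 else
    (-1 : ℝ) ^ m * (lagP m (-α) (-x) * lagP (n - m) (α - 1) x
      - (m : ℝ) * x * lagP (m - 1) (-α + 1) (-x) * lagP (n - m - 1) α x)

/-- Type I `X_m`-Jacobi exceptional orthogonal polynomial `P̂^{(I,m)}_n(x;α,β)`. -/
noncomputable def jacI (m n : ℕ) (α β x : ℝ) : ℝ :=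
  (1 / (β + (n : ℝ) - (m : ℝ))) *
    (jacP m α (-β) x * ((n : ℝ) * (1 + x) * jacP (n - 1) (α + 1) (β + 1) x
        + β * jacP n α β x)
      - (m : ℝ) * (1 + x) * jacP (m - 1) (α + 1) (-β + 1) x * jacP n α β x)

/-- Type II `X_m`-Jacobi exceptional orthogonal polynomial `P̂^{(II,m)}_n(x;α,β)`. -/
noncomputable def jacII (m n : ℕ) (α β x : ℝ) : ℝ :=
  (1 / ((m : ℝ) - (n : ℝ) - α)) *
    (jacP m (-α) β x * ((n : ℝ) * (1 - x) * jacP (n - 1) (α + 1) (β + 1) x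
        - α * jacP n α β x)
      - (m : ℝ) * (1 - x) * jacP (m - 1) (-α + 1) (β + 1) x * jacP n α β x)

/-- Type III `X_m`-Jacobi exceptional orthogonal polynomial `P̂^{(III,m)}_n(x;α,β)`. -/
noncomputable def jacIII (m n : ℕ) (α β x : ℝ) : ℝ :=
  if n = 0 then 1 else
    (1 / (α + β + (n : ℝ) - 2 * (m : ℝ) - 1)) *
      ((α + β + (n : ℝ) - (m : ℝ) - 1) * jacP m (-α) (-β) x * jacP (n - m) (α - 1) (β - 1) x
        + (m : ℝ) * (1 - x ^ 2) * jacP (m - 1) (-α + 1) (-β + 1) x * jacP (n - m - 1) α β x)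

/-- Type III `X_m`-Hermite exceptional orthogonal polynomial `Ĥ^{(III,m)}_n(x)`
(a real polynomial, expressed via complex Hermite values). -/
noncomputable def hermIII (m n : ℕ) (x : ℝ) : ℂ :=
  if n = 0 then 1 else
    Complex.I ^ m * (hermC m (Complex.I * x) * hermC (n - m) (x : ℂ)
      + Complex.I * ((m : ℂ) / 2) * hermC (m - 1) (Complex.I * x) * hermC (n - m - 1) (x : ℂ))

/-!
Writing the `k`-th coefficient of `L_n^{(α)}` as `c_k`, the explicit formula for the Jacobi
polynomial expresses `β^n P_n^{(α,γ)}(1 - 2x/β)` as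
`(-2)^n · β^n / (n+α+γ+1)_n · ∑ k, c_k · (γ+n-k+1)⋯(γ+n) / β^k · x^k · (1 - x/β)^{n-k}`,
and for `γ = β + c` both quotients and `1 - x/β` tend to `1`, which gives the classical
Jacobi–Laguerre limit `β^n P_n^{(α,β+c)}(1 - 2x/β) → (-2)^n L_n^{(α)}(x)`. Passing to the limit
termwise in the type II Jacobi polynomial yields an expression which the contiguous relation
`a L_m^{(a)} + m x L_{m-1}^{(a+1)} = (a + m) L_m^{(a-1)}` at `a = -α` identifies with the type II
Laguerre polynomial.
-/

section Product

variable {R : Type*}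

lemma prod_Icc_add_one_add_natCast [CommSemiring R] (a : R) (k n : ℕ) :
    ∏ j ∈ Icc k n, (a + 1 + (j : R)) = ∏ j ∈ Icc (k + 1) (n + 1), (a + (j : R)) := by
  rw [← map_add_right_Icc, prod_map]
  refine prod_congr rfl fun j _ => ?_
  simp only [addRightEmbedding_apply, Nat.cast_add, Nat.cast_one]
  ring

lemma add_mul_prod_Icc_succ_add_natCast [CommRing R] (a : R) {k n : ℕ} (hk : k ≤ n) :
    (a + k) * ∏ j ∈ Icc (k + 1) n, (a + (j : R)) =
      (a + n) * ∏ j ∈ Icc (k + 1) n, (a - 1 + (j : R)) := by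
  induction n, hk using Nat.le_induction with
  | base => simp
  | succ n hkn ih =>
    rw [prod_Icc_succ_top (by lia), prod_Icc_succ_top (by lia), ← mul_assoc, ih]
    push_cast
    ring

end Product

/-- The coefficient of `x ^ k` in the monic Laguerre polynomial `lagP n α x`, for `k ≤ n`.
For `k > n` it is a junk value, because of the truncated subtraction `n - k`. -/
noncomputable def lagCoeff (n : ℕ) (α : ℝ) (k : ℕ) : ℝ :=
  (-1 : ℝ) ^ (n - k) * ((n.factorial : ℝ) / (k.factorial : ℝ)) *
    ((∏ j ∈ Icc (k + 1) n, (α + (j : ℝ))) / ((n - k).factorial : ℝ))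

lemma lagP_eq_sum_lagCoeff (n : ℕ) (α x : ℝ) :
    lagP n α x = ∑ k ∈ range (n + 1), lagCoeff n α k * x ^ k :=
  rfl

lemma succ_mul_lagCoeff_add_one (n : ℕ) (α : ℝ) (k : ℕ) :
    ((n + 1 : ℕ) : ℝ) * lagCoeff n (α + 1) k = ((k + 1 : ℕ) : ℝ) * lagCoeff (n + 1) α (k + 1) := by
  simp only [lagCoeff, prod_Icc_add_one_add_natCast, Nat.add_sub_add_right, Nat.factorial_succ,
    Nat.cast_mul]
  field_simp

lemma add_mul_lagCoeff {n k : ℕ} (hk : k ≤ n) (α : ℝ) :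
    (α + k) * lagCoeff n α k = (α + n) * lagCoeff n (α - 1) k := by
  simp only [lagCoeff]
  linear_combination ((-1 : ℝ) ^ (n - k) * (n.factorial / k.factorial) / (n - k).factorial) *
    add_mul_prod_Icc_succ_add_natCast α hk

lemma neg_two_pow_mul_lagCoeff {n k : ℕ} (hk : k ≤ n) (α : ℝ) :
    (-2 : ℝ) ^ n * lagCoeff n α k =
      2 ^ n * n.factorial * ((∏ j ∈ Icc (k + 1) n, (α + (j : ℝ))) / (n - k).factorial) *
        ((-1) ^ k / k.factorial) := by
  have sign : (-1 : ℝ) ^ n * (-1) ^ (n - k) = (-1) ^ k := by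
    rw [← pow_add, show n + (n - k) = k + 2 * (n - k) by lia, pow_add, pow_mul]
    simp
  rw [lagCoeff, neg_pow (2 : ℝ), ← sign]
  ring

lemma mul_mul_lagP_pred_eq_sum (n : ℕ) (α x : ℝ) :
    n * x * lagP (n - 1) (α + 1) x = ∑ k ∈ range (n + 1), k * lagCoeff n α k * x ^ k := by
  cases n with
  | zero => simp
  | succ n =>
    rw [sum_range_succ', Nat.add_sub_cancel, lagP_eq_sum_lagCoeff, mul_sum]
    simp only [← succ_mul_lagCoeff_add_one, Nat.cast_zero, zero_mul, add_zero]
    exact sum_congr rfl fun k _ => by ring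

lemma mul_lagP_add_mul_mul_lagP_pred (n : ℕ) (α x : ℝ) :
    α * lagP n α x + n * x * lagP (n - 1) (α + 1) x = (α + n) * lagP n (α - 1) x := by
  rw [mul_mul_lagP_pred_eq_sum, lagP_eq_sum_lagCoeff, lagP_eq_sum_lagCoeff, mul_sum, mul_sum,
    ← sum_add_distrib]
  refine sum_congr rfl fun k hk => ?_
  linear_combination x ^ k * add_mul_lagCoeff (mem_range_succ_iff.mp hk) α

-- The right-hand side is `jacII` with `1 - x` replaced by `-x` and `jacP` by `lagP`.
lemma lagII_eq_one_div_mul_sub (m n : ℕ) (α x : ℝ) :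
    lagII m n α x = 1 / ((m : ℝ) - n - α) *
      (lagP m (-α) x * (-(n * x * lagP (n - 1) (α + 1) x) - α * lagP n α x)
        - -(m * x * lagP (m - 1) (-α + 1) x) * lagP n α x) := by
  have prefactor : 1 / ((m : ℝ) - n - α) = -(1 / (α + n - m)) := by
    rw [← one_div_neg_eq_neg_one_div]
    congr 1
    ring
  rw [lagII, prefactor]
  linear_combination (1 / (α + n - m)) * lagP n α x * mul_lagP_add_mul_mul_lagP_pred m (-α) x

section RatioLimit

variable {𝕜 : Type*} [Field 𝕜] [LinearOrder 𝕜] [IsStrictOrderedRing 𝕜] [TopologicalSpace 𝕜]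
  [OrderTopology 𝕜]

lemma tendsto_add_const_div_self_atTop (c : 𝕜) :
    Tendsto (fun b : 𝕜 => (b + c) / b) atTop (𝓝 1) := by
  have limit : Tendsto (fun b : 𝕜 => 1 + c / b) atTop (𝓝 (1 + 0)) :=
    (tendsto_id.const_div_atTop c).const_add 1
  rw [add_zero] at limit
  refine limit.congr' ?_
  filter_upwards [eventually_ne_atTop 0] with b hb
  rw [add_div, div_self hb]

lemma tendsto_prod_add_const_div_pow_card_atTop {ι : Type*} (s : Finset ι) (c : ι → 𝕜) :
    Tendsto (fun b : 𝕜 => (∏ j ∈ s, (b + c j)) / b ^ #s) atTop (𝓝 1) := by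
  simpa only [prod_div_distrib, prod_const, one_pow] using
    tendsto_finsetProd s fun j _ => tendsto_add_const_div_self_atTop (c j)

end RatioLimit

lemma tendsto_poch_add_const_div_pow_atTop (c : ℝ) (n : ℕ) :
    Tendsto (fun β : ℝ => poch (β + c) n / β ^ n) atTop (𝓝 1) := by
  simpa only [poch, add_assoc, card_range] using
    tendsto_prod_add_const_div_pow_card_atTop (range n) fun j : ℕ => c + (j : ℝ)

lemma tendsto_prod_Icc_add_const_div_pow_atTop {n k : ℕ} (hk : k ≤ n) (c : ℝ) :
    Tendsto (fun β : ℝ => (∏ j ∈ Icc (n - k + 1) n, (β + c + (j : ℝ))) / β ^ k) atTop (𝓝 1) := by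
  have card_eq : #(Icc (n - k + 1) n) = k := by
    rw [Nat.card_Icc]
    lia
  simpa only [add_assoc, card_eq] using
    tendsto_prod_add_const_div_pow_card_atTop (Icc (n - k + 1) n) fun j : ℕ => c + (j : ℝ)

lemma pow_mul_jacP_one_sub_two_mul_div (n : ℕ) (α β γ x : ℝ) :
    β ^ n * jacP n α γ (1 - 2 * x / β) =
      (-2) ^ n / (poch (γ + (n + α + 1)) n / β ^ n) *
        ∑ k ∈ range (n + 1), lagCoeff n α k *
          ((∏ j ∈ Icc (n - k + 1) n, (γ + (j : ℝ))) / β ^ k) * x ^ k * (1 - x / β) ^ (n - k) := by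
  have poch_arg : (n : ℝ) + α + γ + 1 = γ + (n + α + 1) := by ring
  have half_sub_one : (1 - 2 * x / β - 1) / 2 = -1 * x / β := by ring
  have half_add_one : (1 - 2 * x / β + 1) / 2 = 1 - x / β := by ring
  rw [jacP, poch_arg, half_sub_one, half_add_one, mul_sum, mul_sum, mul_sum]
  refine sum_congr rfl fun k hk => ?_
  rw [div_pow, mul_pow, div_div_eq_mul_div]
  linear_combination -(β ^ n / poch (γ + (n + α + 1)) n *
    ((∏ j ∈ Icc (n - k + 1) n, (γ + (j : ℝ))) / β ^ k) * x ^ k * (1 - x / β) ^ (n - k)) *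
      neg_two_pow_mul_lagCoeff (mem_range_succ_iff.mp hk) α

lemma tendsto_pow_mul_jacP_add_const (n : ℕ) (α c x : ℝ) :
    Tendsto (fun β : ℝ => β ^ n * jacP n α (β + c) (1 - 2 * x / β)) atTop
      (𝓝 ((-2) ^ n * lagP n α x)) := by
  simp only [pow_mul_jacP_one_sub_two_mul_div, add_assoc _ c]
  have prefactor : Tendsto (fun β : ℝ => (-2) ^ n / (poch (β + (c + (n + α + 1))) n / β ^ n)) atTop
      (𝓝 ((-2) ^ n)) := by
    simpa only [Pi.div_def, div_one] using
      tendsto_const_nhds.div (tendsto_poch_add_const_div_pow_atTop (c + (n + α + 1)) n) one_ne_zero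
  have one_sub_div : Tendsto (fun β : ℝ => 1 - x / β) atTop (𝓝 1) := by
    simpa only [sub_zero, id] using (tendsto_id.const_div_atTop x).const_sub 1
  refine prefactor.mul ?_
  rw [lagP_eq_sum_lagCoeff]
  refine tendsto_finsetSum _ fun k hk => ?_
  have ratio := tendsto_prod_Icc_add_const_div_pow_atTop (mem_range_succ_iff.mp hk) c
  simpa only [mul_one, one_pow, add_assoc] using
    ((ratio.const_mul (lagCoeff n α k)).mul_const (x ^ k)).mul (one_sub_div.pow (n - k))

lemma tendsto_pow_mul_jacP (n : ℕ) (α x : ℝ) :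
    Tendsto (fun β : ℝ => β ^ n * jacP n α β (1 - 2 * x / β)) atTop
      (𝓝 ((-2) ^ n * lagP n α x)) := by
  simpa only [add_zero] using tendsto_pow_mul_jacP_add_const n α 0 x

lemma tendsto_pow_mul_one_sub_mul_jacP_pred (n : ℕ) (α c x : ℝ) :
    Tendsto (fun β : ℝ => β ^ n * (n * (1 - (1 - 2 * x / β)) *
      jacP (n - 1) α (β + c) (1 - 2 * x / β))) atTop
      (𝓝 ((-2) ^ n * -(n * x * lagP (n - 1) α x))) := by
  cases n with
  | zero => simp
  | succ n =>
    have limit := (tendsto_pow_mul_jacP_add_const n α c x).const_mul (((n + 1 : ℕ) : ℝ) * (2 * x))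
    rw [Nat.add_sub_cancel]
    convert limit.congr' ?_ using 2
    · ring
    · filter_upwards [eventually_ne_atTop 0] with β hβ
      rw [sub_sub_cancel, pow_succ]
      field_simp

theorem stmt1 (m n : ℕ) (α : ℝ) (h : α + (n : ℝ) - (m : ℝ) ≠ 0) (x : ℝ) :
    Filter.Tendsto (fun β : ℝ => β ^ (n + m) * jacII m n α β (1 - 2 * x / β)) Filter.atTop
      (nhds ((-2 : ℝ) ^ (n + m) * lagII m n α x)) := by
  have limit_m := tendsto_pow_mul_jacP m (-α) x
  have limit_n := tendsto_pow_mul_jacP n α x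
  have limit_m_pred := tendsto_pow_mul_one_sub_mul_jacP_pred m (-α + 1) 1 x
  have limit_n_pred := tendsto_pow_mul_one_sub_mul_jacP_pred n (α + 1) 1 x
  have limit := ((limit_m.mul (limit_n_pred.sub (limit_n.const_mul α))).sub
    (limit_m_pred.mul limit_n)).const_mul (1 / ((m : ℝ) - n - α))
  convert limit using 2
  · rw [jacII]
    ring
  · rw [lagII_eq_one_div_mul_sub]
    ring
end

section
/- Let m ∈ ℕ be even and n ≥ m+1. For every x ∈ ℝ, lim_{α→∞} α^{n/2} P̂^{(III,m)}_n(x/√α; α, α) = Ĥ^{(III,m)}_n(x), the limit being taken along real α → +∞ (for all sufficiently large α all occurring polynomials are defined). -/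
open Finset Filter Topology

/-!
Comparing coefficients of `tⁿ` in `(1 + u t)^r (1 + v t)^r = (1 + (u + v) t + u v t²)^r`, with
`u = (x - 1) / 2` and `v = (x + 1) / 2`, writes `P_n^{(a,a)}(x)` as a combination of the products
`x^(n-2k) ((x² - 1) / 4)^k` whose coefficients are generalized binomials in `a`. Replacing `x` by
`x / s` and multiplying by `sⁿ`, every term converges once `a / s² → c ≠ 0`, and the limit is a
Hermite polynomial of variance parameter `1 / c`. With `s = √α`, the factors of the exceptional
Jacobi polynomial with parameters near `α` have `c = 1` and give `H_k(x)`, while those with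
parameters near `-α` have `c = -1` and give `i⁻ᵏ H_k(i x)`. The powers of `i` collect
into the sign `(-1)^m`.
-/

section BinomialConvolution

open Polynomial

variable {R : Type*} [CommSemiring R]

theorem coeff_C_add_C_mul_X_pow (p q : R) (n k : ℕ) :
    ((C p + C q * X) ^ n).coeff k = n.choose k * p ^ (n - k) * q ^ k := by
  have hcomp : (C p + C q * X) ^ n = ((X + C p) ^ n).comp (C q * X) := by simp [add_comm]
  rw [hcomp, comp_C_mul_X_coeff, coeff_X_add_C_pow]
  ring

theorem coeff_one_add_X_mul_pow (f : R[X]) (r n : ℕ) :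
    ((1 + X * f) ^ r).coeff n =
      ∑ j ∈ range (n + 1), (r.choose j : R) * (f ^ j).coeff (n - j) := by
  have hterm (j : ℕ) : ((X * f) ^ j * 1 ^ (r - j) * (r.choose j : R[X])).coeff n =
      if j ≤ n then (r.choose j : R) * (f ^ j).coeff (n - j) else 0 := by
    rw [one_pow, mul_one, coeff_mul_natCast, mul_pow, coeff_X_pow_mul', ite_mul, zero_mul,
      mul_comm]
  rw [add_comm, add_pow, finsetSum_coeff]
  simp only [hterm]
  rw [← sum_filter]
  refine sum_subset (fun j hj ↦ ?_) fun j hj hj' ↦ ?_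
  · simp only [mem_filter, mem_range] at hj ⊢
    omega
  · simp only [mem_filter, mem_range] at hj hj'
    rw [Nat.choose_eq_zero_of_lt (by omega), Nat.cast_zero, zero_mul]

theorem sum_natChoose_mul_natChoose_mul_pow (r n : ℕ) (u v : R) :
    ∑ ij ∈ antidiagonal n, (r.choose ij.1 : R) * r.choose ij.2 * u ^ ij.1 * v ^ ij.2 =
      ∑ k ∈ range (n / 2 + 1),
        (r.choose (n - k) : R) * (n - k).choose k * (u + v) ^ (n - 2 * k) * (u * v) ^ k := by
  have hfactor : (C 1 + C u * X) ^ r * (C 1 + C v * X) ^ r =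
      (1 + X * (C (u + v) + C (u * v) * X)) ^ r := by
    rw [← mul_pow]
    congr 1
    simp only [map_add, map_mul, map_one]
    ring
  calc
    _ = ((C 1 + C u * X) ^ r * (C 1 + C v * X) ^ r).coeff n := by
      rw [coeff_mul]
      refine sum_congr rfl fun ij _ ↦ ?_
      rw [coeff_C_add_C_mul_X_pow, coeff_C_add_C_mul_X_pow, one_pow, one_pow]
      ring
    _ = ∑ k ∈ range (n + 1),
          (r.choose (n - k) : R) * (n - k).choose k * (u + v) ^ (n - 2 * k) * (u * v) ^ k := by
      rw [hfactor, coeff_one_add_X_mul_pow, ← sum_flip]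
      refine sum_congr rfl fun k hk ↦ ?_
      rw [coeff_C_add_C_mul_X_pow, Nat.sub_sub_self (mem_range_succ_iff.mp hk), Nat.sub_sub,
        ← two_mul]
      ring
    _ = _ := by
      refine (sum_subset (range_subset_range.mpr (by omega)) fun k _ hk ↦ ?_).symm
      rw [mem_range] at hk
      rw [Nat.choose_eq_zero_of_lt (show n - k < k by omega)]
      simp

variable {K : Type*} [Field K] [CharZero K]

theorem ringChoose_eq_eval_descPochhammer_div (r : K) (k : ℕ) :
    Ring.choose r k = (descPochhammer K k).eval r / k.factorial := by
  rw [Ring.choose_eq_smul, ← descPochhammer_map (algebraMap ℤ K), eval_map_algebraMap,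
    aeval_eq_smeval, smul_eq_mul, div_eq_inv_mul]

theorem prod_Icc_add_div_factorial (a : K) {n k : ℕ} (hk : k ≤ n) :
    (∏ j ∈ Icc (n - k + 1) n, (a + (j : K))) / k.factorial = Ring.choose (a + n) k := by
  rw [ringChoose_eq_eval_descPochhammer_div, descPochhammer_eval_eq_prod_range]
  congr 1
  refine prod_bij' (fun j _ ↦ n - j) (fun j _ ↦ n - j) ?_ ?_ ?_ ?_ ?_ <;>
    simp only [mem_Icc, mem_range]
  iterate 4 omega
  intro j hj
  rw [Nat.cast_sub hj.2]
  ring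

theorem sum_ringChoose_mul_ringChoose_mul_pow (r : K) (n : ℕ) (u v : K) :
    ∑ ij ∈ antidiagonal n, Ring.choose r ij.1 * Ring.choose r ij.2 * u ^ ij.1 * v ^ ij.2 =
      ∑ k ∈ range (n / 2 + 1),
        Ring.choose r (n - k) * (n - k).choose k * (u + v) ^ (n - 2 * k) * (u * v) ^ k := by
  let binom (k : ℕ) : K[X] := C (k.factorial : K)⁻¹ * descPochhammer K k
  have eval_binom (t : K) (k : ℕ) : (binom k).eval t = Ring.choose t k := by
    rw [ringChoose_eq_eval_descPochhammer_div, eval_C_mul, div_eq_inv_mul]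
  let lhs : K[X] := ∑ ij ∈ antidiagonal n, binom ij.1 * binom ij.2 * C u ^ ij.1 * C v ^ ij.2
  let rhs : K[X] := ∑ k ∈ range (n / 2 + 1),
    binom (n - k) * ((n - k).choose k : K[X]) * (C u + C v) ^ (n - 2 * k) * (C u * C v) ^ k
  suffices hpoly : lhs = rhs by
    simpa [lhs, rhs, eval_finsetSum, eval_binom] using congrArg (eval r) hpoly
  -- Both sides are polynomials in `r`, so agreement at the naturals suffices.
  refine eq_of_infinite_eval_eq _ _
    ((Set.infinite_range_of_injective Nat.cast_injective).mono ?_)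
  rintro _ ⟨N, rfl⟩
  simpa [lhs, rhs, eval_finsetSum, eval_binom, Ring.choose_natCast] using
    sum_natChoose_mul_natChoose_mul_pow N n u v

end BinomialConvolution

theorem jacP_self (n : ℕ) (a x : ℝ) :
    jacP n a a x = 2 ^ n * n.factorial / poch (n + a + a + 1) n *
      ∑ k ∈ range (n / 2 + 1), Ring.choose (a + n) (n - k) * (n - k).choose k *
        x ^ (n - 2 * k) * ((x ^ 2 - 1) / 4) ^ k := by
  have hsum := sum_ringChoose_mul_ringChoose_mul_pow (a + n) n ((x - 1) / 2) ((x + 1) / 2)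
  rw [show (x - 1) / 2 + (x + 1) / 2 = x by ring,
    show (x - 1) / 2 * ((x + 1) / 2) = (x ^ 2 - 1) / 4 by ring] at hsum
  rw [jacP, ← hsum, Nat.sum_antidiagonal_eq_sum_range_succ_mk]
  congr 1
  refine sum_congr rfl fun s hs ↦ ?_
  have hsn : s ≤ n := mem_range_succ_iff.mp hs
  rw [prod_Icc_add_div_factorial a hsn, ← prod_Icc_add_div_factorial a (Nat.sub_le n s),
    Nat.sub_sub_self hsn]
  ring

theorem pow_mul_jacP_self_div (n : ℕ) (a x : ℝ) {s : ℝ} (hs : s ≠ 0) :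
    s ^ n * jacP n a a (x / s) =
      2 ^ n * n.factorial / (poch (n + a + a + 1) n / (s ^ 2) ^ n) *
        ∑ k ∈ range (n / 2 + 1), Ring.choose (a + n) (n - k) / (s ^ 2) ^ (n - k) *
          (n - k).choose k * x ^ (n - 2 * k) * ((x ^ 2 / s ^ 2 - 1) / 4) ^ k := by
  have hterm (k : ℕ) (hk : k ∈ range (n / 2 + 1)) :
      s ^ n * (Ring.choose (a + n) (n - k) * (n - k).choose k * (x / s) ^ (n - 2 * k) *
          (((x / s) ^ 2 - 1) / 4) ^ k) =
        (s ^ 2) ^ n * (Ring.choose (a + n) (n - k) / (s ^ 2) ^ (n - k) *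
          (n - k).choose k * x ^ (n - 2 * k) * ((x ^ 2 / s ^ 2 - 1) / 4) ^ k) := by
    rw [mem_range] at hk
    have hpow : s ^ n = s ^ (n - 2 * k) * (s ^ 2) ^ k := by
      rw [← pow_mul, ← pow_add, Nat.sub_add_cancel (by omega)]
    have hpow_sq : (s ^ 2) ^ n = (s ^ 2) ^ (n - k) * (s ^ 2) ^ k := by
      rw [← pow_add, Nat.sub_add_cancel (by omega)]
    rw [hpow, hpow_sq, div_pow x s 2, div_pow]
    generalize ((x ^ 2 / s ^ 2 - 1) / 4) ^ k = z
    field_simp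
  rw [jacP_self, mul_left_comm, mul_sum, sum_congr rfl hterm, ← mul_sum, div_div_eq_mul_div]
  ring

theorem pow_mul_jacIII_div {m n : ℕ} (hmn : m + 1 ≤ n) (a b x : ℝ) {s : ℝ} (hs : s ≠ 0) :
    s ^ n * jacIII m n a b (x / s) =
      (a + b + n - m - 1) / (a + b + n - 2 * m - 1) * (s ^ m * jacP m (-a) (-b) (x / s)) *
          (s ^ (n - m) * jacP (n - m) (a - 1) (b - 1) (x / s)) +
        m * ((s ^ 2 - x ^ 2) / (a + b + n - 2 * m - 1)) *
          (s ^ (m - 1) * jacP (m - 1) (-a + 1) (-b + 1) (x / s)) *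
          (s ^ (n - m - 1) * jacP (n - m - 1) a b (x / s)) := by
  obtain ⟨d, rfl⟩ := Nat.exists_eq_add_of_le hmn
  rw [jacIII, if_neg (by omega), show m + 1 + d - m = d + 1 by omega, Nat.add_sub_cancel]
  have hsq : 1 - (x / s) ^ 2 = (s ^ 2 - x ^ 2) / s ^ 2 := by
    field_simp
  rw [hsq]
  cases m with
  | zero =>
    rw [Nat.cast_zero]
    ring
  | succ m =>
    rw [Nat.add_sub_cancel]
    field_simp
    ring

section Limits

variable {ι : Type*} {l : Filter ι} {b T : ι → ℝ} {c : ℝ}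

theorem tendsto_add_const_div (hT : Tendsto T l atTop)
    (hb : Tendsto (fun i ↦ b i / T i) l (𝓝 c)) (d : ℝ) :
    Tendsto (fun i ↦ (b i + d) / T i) l (𝓝 c) := by
  simpa only [add_div, add_zero] using hb.add (hT.const_div_atTop d)

theorem tendsto_prod_add_div_pow (hT : Tendsto T l atTop)
    (hb : Tendsto (fun i ↦ b i / T i) l (𝓝 c)) (d : ℕ → ℝ) (k : ℕ) :
    Tendsto (fun i ↦ (∏ j ∈ range k, (b i + d j)) / T i ^ k) l (𝓝 (c ^ k)) := by
  simpa only [prod_div_distrib, prod_const, card_range] using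
    tendsto_finsetProd (range k) fun j _ ↦ tendsto_add_const_div hT hb (d j)

theorem tendsto_poch_div_pow (hT : Tendsto T l atTop)
    (hb : Tendsto (fun i ↦ b i / T i) l (𝓝 c)) (k : ℕ) :
    Tendsto (fun i ↦ poch (b i) k / T i ^ k) l (𝓝 (c ^ k)) :=
  tendsto_prod_add_div_pow hT hb (fun j ↦ j) k

theorem tendsto_ringChoose_div_pow (hT : Tendsto T l atTop)
    (hb : Tendsto (fun i ↦ b i / T i) l (𝓝 c)) (k : ℕ) :
    Tendsto (fun i ↦ Ring.choose (b i) k / T i ^ k) l (𝓝 (c ^ k / k.factorial)) := by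
  refine ((tendsto_prod_add_div_pow hT hb (fun j ↦ -j) k).div_const _).congr fun i ↦ ?_
  rw [ringChoose_eq_eval_descPochhammer_div, descPochhammer_eval_eq_prod_range, div_right_comm]
  simp only [sub_eq_add_neg]

theorem tendsto_div_of_tendsto_div_div {b' : ι → ℝ} {c' : ℝ} (hT : Tendsto T l atTop)
    (hb : Tendsto (fun i ↦ b i / T i) l (𝓝 c)) (hb' : Tendsto (fun i ↦ b' i / T i) l (𝓝 c'))
    (hc' : c' ≠ 0) :
    Tendsto (fun i ↦ b i / b' i) l (𝓝 (c / c')) :=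
  (hb.div hb' hc').congr' <|
    (hT.eventually_ne_atTop 0).mono fun _ hi ↦ div_div_div_cancel_right₀ hi _ _

end Limits

/-- The monic Hermite polynomial with variance parameter `c`, whose exponential generating function
is `exp (x t - c t² / 4)`. It is `H_n(x)` for `c = 1` and `i⁻ⁿ H_n(i x)` for `c = -1`, so it treats
both kinds of Hermite factor of `hermIII` as real polynomials. -/
noncomputable def scaledHermite (c : ℝ) (n : ℕ) (x : ℝ) : ℝ :=
  ∑ k ∈ range (n / 2 + 1),
    (-c) ^ k * ((n.factorial : ℝ) / (k.factorial * (n - 2 * k).factorial * 4 ^ k)) *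
      x ^ (n - 2 * k)

theorem scaledHermite_inv_eq_mul_sum {c : ℝ} (hc : c ≠ 0) (n : ℕ) (x : ℝ) :
    scaledHermite c⁻¹ n x = 2 ^ n * n.factorial / (2 * c) ^ n *
      ∑ k ∈ range (n / 2 + 1), c ^ (n - k) / (n - k).factorial * (n - k).choose k *
        x ^ (n - 2 * k) * (-1 / 4) ^ k := by
  rw [scaledHermite, mul_sum]
  refine sum_congr rfl fun k hk ↦ ?_
  rw [mem_range] at hk
  have hchoose : ((n - k).choose k : ℝ) =
      (n - k).factorial / (k.factorial * (n - 2 * k).factorial) := by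
    rw [Nat.cast_choose ℝ (by omega), Nat.sub_sub, ← two_mul]
  have hpow : c ^ n = c ^ (n - k) * c ^ k := by
    rw [← pow_add, Nat.sub_add_cancel (by omega)]
  rw [hchoose, mul_pow, hpow, neg_pow, neg_div, neg_pow (1 / 4), inv_pow, div_pow, one_pow]
  field_simp

theorem hermC_ofReal (n : ℕ) (x : ℝ) : hermC n x = scaledHermite 1 n x := by
  simp [hermC, scaledHermite]

theorem hermC_I_mul_ofReal (n : ℕ) (x : ℝ) :
    hermC n (Complex.I * x) = Complex.I ^ n * scaledHermite (-1) n x := by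
  simp only [hermC, scaledHermite, Complex.ofReal_sum, mul_sum]
  refine sum_congr rfl fun k hk ↦ ?_
  rw [mem_range] at hk
  have hI : Complex.I ^ n = Complex.I ^ (n - 2 * k) * (-1) ^ k := by
    rw [← Complex.I_sq, ← pow_mul, ← pow_add]
    congr 1
    omega
  rw [hI, mul_pow]
  push_cast
  ring

theorem neg_one_pow_mul_hermIII (m : ℕ) {n : ℕ} (hn : n ≠ 0) (x : ℝ) :
    (-1) ^ m * hermIII m n x =
      ((scaledHermite (-1) m x * scaledHermite 1 (n - m) x +
        m / 2 * scaledHermite (-1) (m - 1) x * scaledHermite 1 (n - m - 1) x : ℝ) : ℂ) := by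
  have hI : Complex.I ^ m * Complex.I ^ m = (-1) ^ m := by rw [← mul_pow, Complex.I_mul_I]
  have hsign : ((-1) ^ m * (-1) ^ m : ℂ) = 1 := by rw [← mul_pow]; simp
  rw [hermIII, if_neg hn]
  simp only [hermC_ofReal, hermC_I_mul_ofReal]
  push_cast
  cases m with
  | zero => simp
  | succ m =>
    rw [Nat.add_sub_cancel]
    linear_combination ((-1) ^ (m + 1) * hI + hsign) *
      (scaledHermite (-1) (m + 1) x * scaledHermite 1 (n - (m + 1)) x +
        (m + 1 : ℕ) / 2 * scaledHermite (-1) m x * scaledHermite 1 (n - (m + 1) - 1) x)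

section JacobiHermiteLimit

variable {ι : Type*} {l : Filter ι} {a s : ι → ℝ} {c : ℝ}

theorem tendsto_pow_mul_jacP_self_div (hs : Tendsto s l atTop)
    (ha : Tendsto (fun i ↦ a i / s i ^ 2) l (𝓝 c)) (hc : c ≠ 0) (n : ℕ) (x : ℝ) :
    Tendsto (fun i ↦ s i ^ n * jacP n (a i) (a i) (x / s i)) l
      (𝓝 (scaledHermite c⁻¹ n x)) := by
  have hs2 : Tendsto (fun i ↦ s i ^ 2) l atTop := (tendsto_pow_atTop two_ne_zero).comp hs
  have hpoch : Tendsto (fun i ↦ poch (n + a i + a i + 1) n / (s i ^ 2) ^ n) l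
      (𝓝 ((2 * c) ^ n)) := by
    refine tendsto_poch_div_pow hs2 ?_ n
    refine (tendsto_add_const_div hs2 (b := fun i ↦ 2 * a i) ?_ (n + 1)).congr fun i ↦ by ring
    simpa only [mul_div_assoc] using ha.const_mul 2
  have hchoose (k : ℕ) := tendsto_ringChoose_div_pow hs2 (tendsto_add_const_div hs2 ha n) (n - k)
  have hquad : Tendsto (fun i ↦ (x ^ 2 / s i ^ 2 - 1) / 4) l (𝓝 ((0 - 1) / 4)) :=
    ((hs2.const_div_atTop _).sub_const 1).div_const 4
  have hlim := ((tendsto_const_nhds (x := 2 ^ n * (n.factorial : ℝ))).div hpoch (by positivity)).mul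
    (tendsto_finsetSum (range (n / 2 + 1)) fun k _ ↦
      (((hchoose k).mul_const ((n - k).choose k : ℝ)).mul_const (x ^ (n - 2 * k))).mul
        (hquad.pow k))
  rw [zero_sub, ← scaledHermite_inv_eq_mul_sum hc] at hlim
  refine hlim.congr' ?_
  filter_upwards [hs.eventually_ne_atTop 0] with i hi
  exact (pow_mul_jacP_self_div n (a i) x hi).symm

theorem tendsto_pow_mul_jacIII_self_div (hs : Tendsto s l atTop)
    (ha : Tendsto (fun i ↦ a i / s i ^ 2) l (𝓝 c)) (hc : c ≠ 0) {m n : ℕ} (hmn : m + 1 ≤ n)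
    (x : ℝ) :
    Tendsto (fun i ↦ s i ^ n * jacIII m n (a i) (a i) (x / s i)) l
      (𝓝 (scaledHermite (-c⁻¹) m x * scaledHermite c⁻¹ (n - m) x +
        m / (2 * c) * scaledHermite (-c⁻¹) (m - 1) x * scaledHermite c⁻¹ (n - m - 1) x)) := by
  have hs2 : Tendsto (fun i ↦ s i ^ 2) l atTop := (tendsto_pow_atTop two_ne_zero).comp hs
  have hs2_self : Tendsto (fun i ↦ s i ^ 2 / s i ^ 2) l (𝓝 1) :=
    tendsto_const_nhds.congr' <| (hs2.eventually_ne_atTop 0).mono fun i hi ↦ (div_self hi).symm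
  have hc_neg : -c ≠ 0 := neg_ne_zero.mpr hc
  have ha_neg : Tendsto (fun i ↦ -a i / s i ^ 2) l (𝓝 (-c)) := by
    simpa only [neg_div] using ha.neg
  have hlinear (d : ℝ) : Tendsto (fun i ↦ (a i + a i + d) / s i ^ 2) l (𝓝 (c + c)) :=
    tendsto_add_const_div hs2 (by simpa only [add_div] using ha.add ha) d
  have hcc : c + c ≠ 0 := by simpa using hc
  have hratio := tendsto_div_of_tendsto_div_div hs2
    (hlinear (n - m - 1)) (hlinear (n - 2 * m - 1)) hcc
  have hweight := (tendsto_div_of_tendsto_div_div hs2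
    (tendsto_add_const_div hs2 hs2_self (-x ^ 2)) (hlinear (n - 2 * m - 1)) hcc).const_mul (m : ℝ)
  have hm := tendsto_pow_mul_jacP_self_div hs ha_neg hc_neg m x
  have hnm :=
    tendsto_pow_mul_jacP_self_div hs (tendsto_add_const_div hs2 ha (-1)) hc (n - m) x
  have hm_pred :=
    tendsto_pow_mul_jacP_self_div hs (tendsto_add_const_div hs2 ha_neg 1) hc_neg (m - 1) x
  have hnm_pred := tendsto_pow_mul_jacP_self_div hs ha hc (n - m - 1) x
  have hlim := ((hratio.mul hm).mul hnm).add ((hweight.mul hm_pred).mul hnm_pred)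
  rw [div_self hcc, one_mul, mul_one_div, ← two_mul, inv_neg] at hlim
  refine hlim.congr' ?_
  filter_upwards [hs.eventually_ne_atTop 0] with i hi
  rw [pow_mul_jacIII_div hmn _ _ x hi]
  simp only [sub_eq_add_neg, add_assoc]

end JacobiHermiteLimit

theorem stmt3_general (m n : ℕ) (hn : m + 1 ≤ n) (x : ℝ) :
    Tendsto (fun α : ℝ ↦ ((α ^ ((n : ℝ) / 2) * jacIII m n α α (x / √α) : ℝ) : ℂ)) atTop
      (𝓝 ((-1) ^ m * hermIII m n x)) := by
  have hscale : Tendsto (fun α : ℝ ↦ α / √α ^ 2) atTop (𝓝 1) := by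
    refine tendsto_const_nhds.congr' ?_
    filter_upwards [eventually_gt_atTop 0] with α hα
    rw [Real.sq_sqrt hα.le, div_self hα.ne']
  have hlim := tendsto_pow_mul_jacIII_self_div Real.tendsto_sqrt_atTop hscale one_ne_zero hn x
  rw [inv_one, mul_one] at hlim
  rw [neg_one_pow_mul_hermIII m (by omega) x]
  refine (Complex.continuous_ofReal.tendsto _).comp (hlim.congr' ?_)
  filter_upwards [eventually_ge_atTop 0] with α hα
  rw [Real.rpow_div_two_eq_sqrt _ hα, Real.rpow_natCast]

theorem stmt3 (m n : ℕ) (hm : Even m) (hn : m + 1 ≤ n) (x : ℝ) :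
    Filter.Tendsto
      (fun α : ℝ => ((α ^ ((n : ℝ) / 2) * jacIII m n α α (x / Real.sqrt α) : ℝ) : ℂ))
      Filter.atTop (nhds (hermIII m n x)) := by
  simpa only [hm.neg_one_pow, one_mul] using stmt3_general m n hn x
end

section
/- Let m ∈ ℕ be even and n ≥ m+1. For every x ∈ ℝ, lim_{α→∞} (2α)^{−n/2} L̂^{(III,m)}_n(√(2α)·x + α; α) = Ĥ^{(III,m)}_n(x), the limit being taken along real α → +∞. -/
open Finset Filter Topology

/-!
Both families obey three-term recurrences. For the monic Laguerre polynomials it follows from the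
contiguous relations `L_{n+1}^{(a)} = x L_n^{(a+1)} - (a+n+1) L_n^{(a)}` (Pascal's rule applied to
the coefficients) and `L_{n+1}^{(a+1)} = L_{n+1}^{(a)} - (n+1) L_n^{(a+1)}`. With `s = √(2α)`, so
that `α = s²/2`, evaluate at parameter `ε s²/2 + c` and point `ε (s x + s²/2)` and divide the
degree `k` polynomial by `s ^ k`: the coefficients of the recurrence then converge to those of
`ω ^ k H_k(ω x)`, for any `ω` with `ω² = ε`. The four Laguerre factors of the exceptional
polynomial are the cases `ε = 1`, `ω = 1` and `ε = -1`, `ω = i`. The prefactor `(-1) ^ m` of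
`L̂^{(III,m)}` has no counterpart in `Ĥ^{(III,m)}`, so for odd `m` the limit changes sign.
-/

lemma poch_succ (a : ℝ) (n : ℕ) : poch a (n + 1) = poch a n * (a + n) :=
  prod_range_succ _ n

lemma prod_Icc_add_eq_poch (a : ℝ) (i j : ℕ) :
    ∏ l ∈ Icc (i + 1) (i + j), (a + (l : ℝ)) = poch (a + i + 1) j := by
  induction j with
  | zero => simp [poch]
  | succ j ih =>
    rw [← add_assoc, prod_Icc_succ_top (by lia), ih, poch_succ]
    push_cast
    ring

lemma lagP_eq_sum_antidiagonal (n : ℕ) (a x : ℝ) :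
    lagP n a x = ∑ ij ∈ antidiagonal n,
      (n.choose ij.1 : ℝ) * ((-1) ^ ij.2 * poch (a + ij.1 + 1) ij.2 * x ^ ij.1) := by
  rw [Nat.sum_antidiagonal_eq_sum_range_succ_mk, lagP]
  refine sum_congr rfl fun i hi => ?_
  have hin : i ≤ n := mem_range_succ_iff.mp hi
  have hprod := prod_Icc_add_eq_poch a i (n - i)
  rw [Nat.add_sub_cancel' hin] at hprod
  rw [hprod, Nat.cast_choose ℝ hin]
  field_simp

lemma lagP_zero (a x : ℝ) : lagP 0 a x = 1 := by simp [lagP]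

lemma lagP_succ (n : ℕ) (a x : ℝ) :
    lagP (n + 1) a x = x * lagP n (a + 1) x - (a + n + 1) * lagP n a x := by
  simp only [lagP_eq_sum_antidiagonal]
  rw [sum_antidiagonal_choose_succ_mul
      (fun i j => (-1 : ℝ) ^ j * poch (a + i + 1) j * x ^ i), mul_sum, mul_sum,
    ← sum_add_distrib, ← sum_sub_distrib]
  refine sum_congr rfl fun ij hij => ?_
  have hsum : ij.1 + ij.2 = n := mem_antidiagonal.mp hij
  have hshift : a + ((ij.1 + 1 : ℕ) : ℝ) + 1 = a + 1 + ij.1 + 1 := by push_cast; ring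
  rw [← Nat.choose_symm_of_eq_add hsum.symm, hshift, poch_succ, ← hsum]
  push_cast
  ring

lemma lagP_one (a x : ℝ) : lagP 1 a x = x - (a + 1) := by
  simpa [lagP_zero] using lagP_succ 0 a x

lemma lagP_succ_add_one (n : ℕ) (a x : ℝ) :
    lagP (n + 1) (a + 1) x = lagP (n + 1) a x - (n + 1) * lagP n (a + 1) x := by
  induction n generalizing a with
  | zero => simp only [zero_add, lagP_one, lagP_zero]; push_cast; ring
  | succ n ih =>
    have hraise := lagP_succ (n + 1) (a + 1) x
    have hbase := lagP_succ (n + 1) a x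
    have hlower := lagP_succ n (a + 1) x
    push_cast at hraise hbase ⊢
    linear_combination hraise - hbase + x * ih (a + 1) - (a + n + 2) * ih a + (n + 1) * hlower

lemma lagP_succ_succ (n : ℕ) (a x : ℝ) :
    lagP (n + 2) a x =
      (x - (2 * n + 3 + a)) * lagP (n + 1) a x - (n + 1) * (n + 1 + a) * lagP n a x := by
  have hsucc := lagP_succ (n + 1) a x
  push_cast at hsucc
  linear_combination hsucc + x * lagP_succ_add_one n a x + (n + 1) * lagP_succ n a x

/-- The `k`-th summand of the monic Hermite polynomial `H_n(z)`. Writing `n! / (n - 2k)!` as a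
falling factorial makes the summand vanish when `n < 2k`, so sums may run over any longer range. -/
noncomputable def hermTerm (n : ℕ) (z : ℂ) (k : ℕ) : ℂ :=
  (-1) ^ k * ((n.descFactorial (2 * k) : ℂ) / (k.factorial * 4 ^ k)) * z ^ (n - 2 * k)

lemma hermTerm_eq_zero_of_lt {n k : ℕ} (h : n < 2 * k) (z : ℂ) : hermTerm n z k = 0 := by
  simp [hermTerm, Nat.descFactorial_eq_zero_iff_lt.mpr h]

lemma hermTerm_zero_right (n : ℕ) (z : ℂ) : hermTerm n z 0 = z ^ n := by
  simp [hermTerm]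

lemma hermC_eq_sum_hermTerm {n N : ℕ} (h : n / 2 + 1 ≤ N) (z : ℂ) :
    hermC n z = ∑ k ∈ range N, hermTerm n z k := by
  have htail : ∀ k ∈ range N, k ∉ range (n / 2 + 1) → hermTerm n z k = 0 := fun k _ hk =>
    hermTerm_eq_zero_of_lt (by rw [mem_range] at hk; lia) z
  rw [← sum_subset (range_mono h) htail, hermC]
  refine sum_congr rfl fun k hk => ?_
  have hkn : 2 * k ≤ n := by rw [mem_range] at hk; lia
  rw [hermTerm, ← Nat.factorial_mul_descFactorial hkn]
  have := Nat.factorial_ne_zero (n - 2 * k)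
  push_cast
  field_simp

lemma succ_descFactorial_succ_eq_add (n k : ℕ) :
    (n + 1).descFactorial (k + 1) = n.descFactorial (k + 1) + (k + 1) * n.descFactorial k := by
  simp only [Nat.descFactorial_eq_factorial_mul_choose, Nat.choose_succ_succ,
    Nat.factorial_succ]
  ring

lemma descFactorial_mul_pow_sub {R : Type*} [CommSemiring R] (n k : ℕ) (z : R) :
    (n.descFactorial (k + 1) : R) * z ^ (n - k) =
      z * (n.descFactorial (k + 1) * z ^ (n - (k + 1))) := by
  rcases le_or_gt (k + 1) n with hk | hk
  · rw [show n - k = n - (k + 1) + 1 by lia, pow_succ]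
    ring
  · simp only [Nat.descFactorial_eq_zero_iff_lt.mpr hk, Nat.cast_zero, zero_mul, mul_zero]

lemma hermTerm_succ_succ (n : ℕ) (z : ℂ) (k : ℕ) :
    hermTerm (n + 2) z (k + 1) =
      z * hermTerm (n + 1) z (k + 1) - (n + 1) / 2 * hermTerm n z k := by
  have hpow := descFactorial_mul_pow_sub (n + 1) (2 * k + 1) z
  have hfact : (k.factorial : ℂ) ≠ 0 := mod_cast k.factorial_ne_zero
  have hk : (k : ℂ) + 1 ≠ 0 := mod_cast k.succ_ne_zero
  simp only [hermTerm, show 2 * (k + 1) = 2 * k + 1 + 1 by ring,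
    succ_descFactorial_succ_eq_add (n + 1), Nat.succ_descFactorial_succ n (2 * k),
    Nat.factorial_succ, pow_succ, show n + 2 - (2 * k + 1 + 1) = n - 2 * k by lia,
    show n + 1 - (2 * k + 1) = n - 2 * k by lia] at hpow ⊢
  push_cast at hpow ⊢
  field_simp
  linear_combination (-2) * hpow

lemma hermC_zero (z : ℂ) : hermC 0 z = 1 := by simp [hermC]

lemma hermC_one (z : ℂ) : hermC 1 z = z := by simp [hermC]

lemma hermC_succ_succ (n : ℕ) (z : ℂ) :
    hermC (n + 2) z = z * hermC (n + 1) z - (n + 1) / 2 * hermC n z := by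
  rw [hermC_eq_sum_hermTerm (N := n + 3) (by lia), hermC_eq_sum_hermTerm (N := n + 3) (by lia),
    hermC_eq_sum_hermTerm (N := n + 2) (by lia), sum_range_succ', sum_range_succ' _ (n + 2)]
  simp only [hermTerm_succ_succ, hermTerm_zero_right, mul_add, mul_sum, sum_sub_distrib]
  ring

/-- The rescaled Laguerre polynomial `s⁻ᵏ L_k^{(ε s²/2 + c)}(ε (s x + s²/2))`, whose limit as
`s → ∞` is a Hermite polynomial; `s` stands for `√(2α)`. -/
noncomputable def scaledLagP (ε c x : ℝ) (k : ℕ) (s : ℝ) : ℝ :=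
  lagP k (ε * (s ^ 2 / 2) + c) (ε * (s * x + s ^ 2 / 2)) / s ^ k

section ScaledLaguerre

variable (ε c x : ℝ) {s : ℝ}

lemma scaledLagP_zero (s : ℝ) : scaledLagP ε c x 0 s = 1 := by
  simp [scaledLagP, lagP_zero]

lemma scaledLagP_one (hs : s ≠ 0) : scaledLagP ε c x 1 s = ε * x - (c + 1) / s := by
  rw [scaledLagP, lagP_one]
  field_simp
  ring

lemma scaledLagP_succ_succ (k : ℕ) (hs : s ≠ 0) :
    scaledLagP ε c x (k + 2) s =
      (ε * x - (2 * k + 3 + c) / s) * scaledLagP ε c x (k + 1) s -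
        (k + 1) * (ε / 2 + (k + 1 + c) / s ^ 2) * scaledLagP ε c x k s := by
  simp only [scaledLagP, lagP_succ_succ]
  field_simp
  ring

end ScaledLaguerre

lemma tendsto_const_add_div_pow_atTop (a b : ℝ) {k : ℕ} (hk : k ≠ 0) :
    Tendsto (fun s : ℝ => a + b / s ^ k) atTop (𝓝 a) := by
  have hdiv : Tendsto (fun s : ℝ => b / s ^ k) atTop (𝓝 0) :=
    tendsto_const_nhds.div_atTop (tendsto_pow_atTop hk)
  simpa using hdiv.const_add a

lemma pow_mul_hermC_succ_succ (ω z : ℂ) (k : ℕ) :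
    ω ^ (k + 2) * hermC (k + 2) (ω * z) =
      ω ^ 2 * z * (ω ^ (k + 1) * hermC (k + 1) (ω * z)) -
        (k + 1) * (ω ^ 2 / 2) * (ω ^ k * hermC k (ω * z)) := by
  rw [hermC_succ_succ]
  ring

theorem tendsto_scaledLagP {ε : ℝ} {ω : ℂ} (hω : ω ^ 2 = ε) (c x : ℝ) (k : ℕ) :
    Tendsto (fun s : ℝ => (scaledLagP ε c x k s : ℂ)) atTop (𝓝 (ω ^ k * hermC k (ω * x))) := by
  have hlin (b : ℝ) : Tendsto (fun s : ℝ => ε * x - b / s) atTop (𝓝 (ε * x)) := by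
    simpa [neg_div, sub_eq_add_neg] using
      tendsto_const_add_div_pow_atTop (ε * x) (-b) one_ne_zero
  induction k using Nat.twoStepInduction with
  | zero => simp [scaledLagP_zero, hermC_zero]
  | one =>
    have hlim : ω ^ 1 * hermC 1 (ω * x) = ((ε * x : ℝ) : ℂ) := by
      rw [hermC_one, Complex.ofReal_mul, ← hω]
      ring
    rw [hlim]
    refine (hlin (c + 1)).ofReal.congr' ?_
    filter_upwards [eventually_ne_atTop 0] with s hs
    rw [scaledLagP_one ε c x hs]
  | more k ih₀ ih₁ =>
    have hconst : Tendsto (fun s : ℝ => (k + 1) * (ε / 2 + (k + 1 + c) / s ^ 2)) atTop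
        (𝓝 ((k + 1) * (ε / 2))) :=
      (tendsto_const_add_div_pow_atTop (ε / 2) (k + 1 + c) two_ne_zero).const_mul _
    have hrec := ((hlin (2 * k + 3 + c)).ofReal.mul ih₁).sub (hconst.ofReal.mul ih₀)
    rw [pow_mul_hermC_succ_succ, hω]
    push_cast at hrec
    refine hrec.congr' ?_
    filter_upwards [eventually_ne_atTop 0] with s hs
    rw [scaledLagP_succ_succ ε c x k hs]
    push_cast
    rfl

lemma tendsto_scaledLagP_one_left (c x : ℝ) (k : ℕ) :
    Tendsto (fun s : ℝ => (scaledLagP 1 c x k s : ℂ)) atTop (𝓝 (hermC k x)) := by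
  simpa using tendsto_scaledLagP (ε := 1) (ω := 1) (by simp) c x k

lemma tendsto_scaledLagP_neg_one_left (c x : ℝ) (k : ℕ) :
    Tendsto (fun s : ℝ => (scaledLagP (-1) c x k s : ℂ)) atTop
      (𝓝 (Complex.I ^ k * hermC k (Complex.I * x))) :=
  tendsto_scaledLagP (by simp) c x k

lemma lagIII_div_pow_eq (m p : ℕ) (x : ℝ) {s : ℝ} (hs : s ≠ 0) :
    lagIII m (m + (p + 1)) (s ^ 2 / 2) (s * x + s ^ 2 / 2) / s ^ (m + (p + 1)) =
      (-1) ^ m * (scaledLagP (-1) 0 x m s * scaledLagP 1 (-1) x (p + 1) s -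
        m * (1 / 2 + x / s) * scaledLagP (-1) 1 x (m - 1) s * scaledLagP 1 0 x p s) := by
  rw [lagIII, if_neg (by lia), Nat.add_sub_cancel_left, Nat.add_sub_cancel]
  simp only [scaledLagP, neg_one_mul, one_mul, add_zero, ← sub_eq_add_neg]
  rcases m with _ | q
  · simp [mul_div_assoc]
  · rw [Nat.add_sub_cancel]
    field_simp
    ring

lemma hermIII_eq_pow_mul (m p : ℕ) (x : ℝ) :
    hermIII m (m + (p + 1)) x =
      Complex.I ^ m * hermC m (Complex.I * x) * hermC (p + 1) x -
        m * (1 / 2) * (Complex.I ^ (m - 1) * hermC (m - 1) (Complex.I * x)) * hermC p x := by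
  rw [hermIII, if_neg (by lia), Nat.add_sub_cancel_left, Nat.add_sub_cancel]
  rcases m with _ | q
  · simp
  · rw [Nat.add_sub_cancel, pow_succ]
    linear_combination (Complex.I ^ q * ((q + 1 : ℕ) / 2) * hermC q (Complex.I * x) *
      hermC p x) * Complex.I_sq

lemma tendsto_lagIII_div_pow (m p : ℕ) (x : ℝ) :
    Tendsto (fun s : ℝ => ((lagIII m (m + (p + 1)) (s ^ 2 / 2) (s * x + s ^ 2 / 2) /
        s ^ (m + (p + 1)) : ℝ) : ℂ))
      atTop (𝓝 ((-1) ^ m * hermIII m (m + (p + 1)) x)) := by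
  have hfirst := (tendsto_scaledLagP_neg_one_left 0 x m).mul
    (tendsto_scaledLagP_one_left (-1) x (p + 1))
  have hfactor : Tendsto (fun s : ℝ => (m : ℝ) * (1 / 2 + x / s)) atTop (𝓝 (m * (1 / 2))) := by
    simpa only [pow_one] using
      (tendsto_const_add_div_pow_atTop (1 / 2) x one_ne_zero).const_mul (m : ℝ)
  have hsecond := (hfactor.ofReal.mul (tendsto_scaledLagP_neg_one_left 1 x (m - 1))).mul
    (tendsto_scaledLagP_one_left 0 x p)
  have hlim := (hfirst.sub hsecond).const_mul ((-1) ^ m)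
  rw [hermIII_eq_pow_mul]
  push_cast at hlim
  refine hlim.congr' ?_
  filter_upwards [eventually_ne_atTop 0] with s hs
  rw [lagIII_div_pow_eq m p x hs]
  push_cast
  rfl

lemma rpow_neg_div_two_eq_inv_sqrt_pow {y : ℝ} (hy : 0 ≤ y) (n : ℕ) :
    y ^ (-(n : ℝ) / 2) = (√y ^ n)⁻¹ := by
  rw [neg_div, Real.rpow_neg hy, Real.rpow_div_two_eq_sqrt _ hy, Real.rpow_natCast]

theorem stmt4_general (m n : ℕ) (hn : m + 1 ≤ n) (x : ℝ) :
    Tendsto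
      (fun α : ℝ => (((2 * α) ^ (-(n : ℝ) / 2) * lagIII m n α (√(2 * α) * x + α) : ℝ) : ℂ))
      atTop (𝓝 ((-1) ^ m * hermIII m n x)) := by
  obtain ⟨p, rfl⟩ : ∃ p, n = m + (p + 1) := ⟨n - m - 1, by lia⟩
  have hsqrt : Tendsto (fun α : ℝ => √(2 * α)) atTop atTop :=
    Real.tendsto_sqrt_atTop.comp (tendsto_id.const_mul_atTop two_pos)
  refine ((tendsto_lagIII_div_pow m p x).comp hsqrt).congr' ?_
  filter_upwards [eventually_ge_atTop 0] with α hα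
  have h2α : 0 ≤ 2 * α := by positivity
  rw [Function.comp_apply, Real.sq_sqrt h2α, mul_div_cancel_left₀ α two_ne_zero,
    rpow_neg_div_two_eq_inv_sqrt_pow h2α, div_eq_inv_mul]

theorem stmt4 (m n : ℕ) (hm : Even m) (hn : m + 1 ≤ n) (x : ℝ) :
    Filter.Tendsto
      (fun α : ℝ =>
        (((2 * α) ^ (-(n : ℝ) / 2) * lagIII m n α (Real.sqrt (2 * α) * x + α) : ℝ) : ℂ))
      Filter.atTop (nhds (hermIII m n x)) := by
  simpa only [hm.neg_one_pow, one_mul] using stmt4_general m n hn x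
end

section
/- Let m ≥ 1 and n ≥ m be integers. Then for every x ∈ ℝ, Ĥ^{(III,2m)}_{2n+1}(x) = (−1)^m x [L_m^{(−1/2)}(−x²) L_{n−m}^{(1/2)}(x²) − m L_{m−1}^{(1/2)}(−x²) L_{n−m}^{(−1/2)}(x²)]. -/
open Finset Filter Topology

/-!
A Hermite polynomial has the parity of its degree, so `H_{2n+ε}(z)`, with `ε ∈ {0, 1}`, is `z ^ ε`
times a polynomial of degree `n` in `z ^ 2`. Comparing coefficients identifies that polynomial as
the Laguerre polynomial `L_n^{(ε - 1/2)}`. Applied at `z = x` and at `z = i x`, where `z ^ 2` is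
`x ^ 2` and `-x ^ 2`, this turns each product in `Ĥ^{(III,2m)}_{2n+1}(x)` into a product of Laguerre
polynomials, and `i ^ 2 = -1` accounts for the signs.
-/

section Parity

variable {ε : ℕ}

lemma factorial_two_mul_add_mul_factorial (hε : ε ≤ 1) (k d : ℕ) :
    ((2 * (k + d) + ε).factorial : ℝ) * k.factorial =
      (k + d).factorial * (2 * k + ε).factorial * 4 ^ d *
        ∏ j ∈ Icc (k + 1) (k + d), ((ε - 1 / 2 : ℝ) + j) := by
  induction d with
  | zero => simp [mul_comm]
  | succ d ih =>
    have ε_sq : (ε : ℝ) ^ 2 = ε := by interval_cases ε <;> norm_num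
    rw [← add_assoc k d 1, prod_Icc_succ_top (by omega),
      show 2 * (k + d + 1) + ε = 2 * (k + d) + ε + 1 + 1 by ring]
    simp only [Nat.factorial_succ]
    push_cast
    linear_combination (2 * (k + d : ℝ) + ε + 2) * (2 * (k + d) + ε + 1) * ih +
      ((k + d).factorial : ℝ) * (2 * k + ε).factorial * 4 ^ d *
        (∏ j ∈ Icc (k + 1) (k + d), ((ε - 1 / 2 : ℝ) + j)) * ε_sq

lemma hermite_coeff_eq_laguerre_coeff (hε : ε ≤ 1) (k d : ℕ) :
    ((2 * (k + d) + ε).factorial : ℝ) / (d.factorial * (2 * k + ε).factorial * 4 ^ d) =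
      (k + d).factorial / k.factorial *
        ((∏ j ∈ Icc (k + 1) (k + d), ((ε - 1 / 2 : ℝ) + j)) / d.factorial) := by
  rw [div_mul_div_comm, div_eq_div_iff (by positivity) (by positivity)]
  linear_combination (d.factorial : ℝ) * factorial_two_mul_add_mul_factorial hε k d

theorem hermC_two_mul_add (hε : ε ≤ 1) (n : ℕ) {z : ℂ} {y : ℝ} (hz : z ^ 2 = y) :
    hermC (2 * n + ε) z = z ^ ε * lagP n (ε - 1 / 2) y := by
  unfold hermC lagP
  rw [show (2 * n + ε) / 2 + 1 = n + 1 by omega, ← sum_range_reflect, Complex.ofReal_sum, mul_sum]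
  refine sum_congr rfl fun k hk ↦ ?_
  obtain ⟨d, rfl⟩ := Nat.exists_eq_add_of_le (mem_range_succ_iff.mp hk)
  have z_pow : z ^ (2 * k + ε) = z ^ ε * (y : ℂ) ^ k := by rw [pow_add, pow_mul, hz, mul_comm]
  rw [show k + d + 1 - 1 - k = d by omega, show 2 * (k + d) + ε - 2 * d = 2 * k + ε by omega,
    Nat.add_sub_cancel_left, z_pow, mul_assoc ((-1 : ℝ) ^ d),
    ← hermite_coeff_eq_laguerre_coeff hε]
  push_cast
  ring

end Parity

theorem hermC_two_mul (n : ℕ) {z : ℂ} {y : ℝ} (hz : z ^ 2 = y) :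
    hermC (2 * n) z = lagP n (-1 / 2) y := by
  simpa [neg_div] using hermC_two_mul_add zero_le_one n hz

theorem hermC_two_mul_add_one (n : ℕ) {z : ℂ} {y : ℝ} (hz : z ^ 2 = y) :
    hermC (2 * n + 1) z = z * lagP n (1 / 2) y := by
  have half : ((1 : ℕ) : ℝ) - 1 / 2 = 1 / 2 := by norm_num
  simpa only [pow_one, half] using hermC_two_mul_add le_rfl n hz

theorem stmt8 (m n : ℕ) (hm : 1 ≤ m) (hn : m ≤ n) (x : ℝ) :
    hermIII (2 * m) (2 * n + 1) x
      = (((-1 : ℝ) ^ m * x *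
          (lagP m (-1 / 2) (-x ^ 2) * lagP (n - m) (1 / 2) (x ^ 2)
            - (m : ℝ) * lagP (m - 1) (1 / 2) (-x ^ 2) * lagP (n - m) (-1 / 2) (x ^ 2)) : ℝ) : ℂ) := by
  have I_mul_sq : (Complex.I * x) ^ 2 = ((-x ^ 2 : ℝ) : ℂ) := by simp [mul_pow]
  have ofReal_sq : (x : ℂ) ^ 2 = ((x ^ 2 : ℝ) : ℂ) := (Complex.ofReal_pow x 2).symm
  rw [hermIII, if_neg (Nat.succ_ne_zero _),
    show 2 * n + 1 - 2 * m = 2 * (n - m) + 1 by omega, Nat.add_sub_cancel,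
    show 2 * m - 1 = 2 * (m - 1) + 1 by omega,
    hermC_two_mul m I_mul_sq, hermC_two_mul_add_one (m - 1) I_mul_sq,
    hermC_two_mul (n - m) ofReal_sq, hermC_two_mul_add_one (n - m) ofReal_sq,
    pow_mul, Complex.I_sq]
  push_cast
  linear_combination (-1 : ℂ) ^ m * m * x * lagP (m - 1) (1 / 2) (-x ^ 2) *
    lagP (n - m) (-1 / 2) (x ^ 2) * Complex.I_sq
end

section
/- Let m ≥ 1 and n ≥ m be integers and α, β ∈ ℝ be such that α+1+n−2m ≠ 0 and all occurring monic Jacobi polynomials are defined. Then for every x ∈ ℝ, (n−m)(x−1) P_m^{(−α−1,β−1)}(x) P_{n−m−1}^{(α+2,β)}(x) + (α+1−m) P_m^{(−α−2,β)}(x) P_{n−m}^{(α+1,β−1)}(x) = (α+1+n−2m) P̂^{(II,m)}_{n−m}(x; α+1, β−1). (This identifies the X_m-Jacobi exceptional polynomials of Gómez-Ullate–Marcellán–Milson with the type II X_m-Jacobi exceptional orthogonal polynomials up to an explicit constant factor.) -/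
open Finset Filter Topology

/-!
In `P̂^{(II,m)}_n(x; α, β)` the bracket multiplying `P_n^{(α,β)}` collapses to a single Jacobi
polynomial by the contiguous relation
`(γ + m) P_m^{(γ-1,β+1)} = γ P_m^{(γ,β)} + m (x - 1) P_{m-1}^{(γ+1,β+1)}` at `γ = -α`; the theorem
is the result for `P̂^{(II,m)}_{n-m}(x; α+1, β-1)`. Coefficientwise in
`((x-1)/2)^s ((x+1)/2)^t`, the contiguous relation is Pascal's rule combined with the absorption
identities for generalized binomial coefficients.
-/

section

variable {R : Type*} [CommRing R] [BinomialRing R]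

theorem succ_mul_ringChoose_succ (a : R) (k : ℕ) :
    (k + 1) * Ring.choose a (k + 1) = (a - k) * Ring.choose a k := by
  have h := Ring.choose_smul_choose a k.le_succ
  rw [Nat.choose_succ_self_right, Nat.succ_eq_add_one, Nat.add_sub_cancel_left,
    Ring.choose_one_right, nsmul_eq_mul] at h
  simpa [mul_comm] using h

theorem succ_mul_ringChoose_add_one_succ (a : R) (k : ℕ) :
    (k + 1) * Ring.choose (a + 1) (k + 1) = (a + 1) * Ring.choose a k := by
  simpa [Ring.choose_one_right] using
    Ring.choose_smul_choose (a + 1) (Nat.succ_le_succ k.zero_le)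

theorem add_one_mul_ringChoose (a : R) (k : ℕ) :
    (a + 1) * Ring.choose a k = (a + 1 - k) * Ring.choose (a + 1) k := by
  rw [← succ_mul_ringChoose_add_one_succ, succ_mul_ringChoose_succ]

theorem add_one_mul_ringChoose_mul_ringChoose (a b : R) (s t : ℕ) :
    (a + 1) * (Ring.choose a t * Ring.choose (b + 1) (s + 1)) =
      (a - s - t) * (Ring.choose (a + 1) t * Ring.choose b (s + 1)) +
        (a + b + 1 - s - t) * (Ring.choose (a + 1) t * Ring.choose b s) := by
  rw [Ring.choose_succ_succ]
  linear_combination (Ring.choose b s + Ring.choose b (s + 1)) * add_one_mul_ringChoose a t +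
    Ring.choose (a + 1) t * succ_mul_ringChoose_succ b s

theorem prod_Icc_add_natCast (a : R) (s d : ℕ) :
    ∏ j ∈ Icc (s + 1) (s + d), (a + j) = d.factorial * Ring.choose (a + (s + d : ℕ)) d := by
  induction d with
  | zero => simp
  | succ d ih =>
    have absorb := succ_mul_ringChoose_add_one_succ (a + (s + d : ℕ)) d
    rw [← add_assoc, prod_Icc_succ_top (by omega), ih, Nat.factorial_succ]
    push_cast [← add_assoc] at absorb ⊢
    linear_combination -(d.factorial : R) * absorb

/-- The homogeneous form `∑_{s+t=n} C(n+α, t) C(n+β, s) u^s v^t`, which at `u = (x-1)/2` and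
`v = (x+1)/2` is the standard (not monic) Jacobi polynomial of degree `n`. The absence of a
normalizing denominator allows coefficients in any binomial ring. -/
def jacobiForm (n : ℕ) (α β u v : R) : R :=
  ∑ p ∈ antidiagonal n,
    Ring.choose (α + n) p.2 * Ring.choose (β + n) p.1 * u ^ p.1 * v ^ p.2

theorem jacobiForm_succ (n : ℕ) (α β u v : R) :
    jacobiForm (n + 1) α β u v =
      Ring.choose (α + n + 1) (n + 1) * v ^ (n + 1) +
        ∑ p ∈ antidiagonal n,
          Ring.choose (α + n + 1) p.2 * Ring.choose (β + n + 1) (p.1 + 1) *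
            u ^ (p.1 + 1) * v ^ p.2 := by
  simp [jacobiForm, Nat.sum_antidiagonal_succ, ← add_assoc]

theorem jacobiForm_contiguous (n : ℕ) (α β u v : R) :
    (α + n + 1) * jacobiForm (n + 1) (α - 1) (β + 1) u v =
      α * jacobiForm (n + 1) α β u v +
        (α + β + n + 2) * u * jacobiForm n (α + 1) (β + 1) u v := by
  have coeff_pure := add_one_mul_ringChoose (α + n) (n + 1)
  have coeff_mixed (p : ℕ × ℕ) (hp : p ∈ antidiagonal n) :
      (α + n + 1) * (Ring.choose (α + n) p.2 * Ring.choose (β + n + 1 + 1) (p.1 + 1)) =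
        α * (Ring.choose (α + n + 1) p.2 * Ring.choose (β + n + 1) (p.1 + 1)) +
          (α + β + n + 2) * (Ring.choose (α + n + 1) p.2 * Ring.choose (β + n + 1) p.1) := by
    have hpn : (p.1 : R) + p.2 = n := by
      rw [← Nat.cast_add, mem_antidiagonal.mp hp]
    rw [add_one_mul_ringChoose_mul_ringChoose, ← hpn]
    ring
  rw [jacobiForm_succ, jacobiForm_succ, jacobiForm, show α - 1 + n + 1 = α + n by ring,
    show β + 1 + n = β + n + 1 by ring, show α + 1 + n = α + n + 1 by ring]
  rw [mul_add, mul_add, add_assoc (α * _), mul_sum, mul_sum, mul_sum, ← sum_add_distrib]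
  congr 1
  · push_cast at coeff_pure
    linear_combination v ^ (n + 1) * coeff_pure
  · refine sum_congr rfl fun p hp ↦ ?_
    linear_combination u ^ (p.1 + 1) * v ^ p.2 * coeff_mixed p hp

end

theorem poch_succ_left (a : ℝ) (n : ℕ) : poch a (n + 1) = a * poch (a + 1) n := by
  simp only [poch, prod_range_succ', Nat.cast_add, Nat.cast_one, Nat.cast_zero, add_zero,
    add_assoc, add_comm (1 : ℝ), mul_comm a]

theorem jacP_eq_jacobiForm (n : ℕ) (α β x : ℝ) :
    jacP n α β x = 2 ^ n * n.factorial / poch (n + α + β + 1) n *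
      jacobiForm n α β ((x - 1) / 2) ((x + 1) / 2) := by
  have prod_div_factorial (γ : ℝ) {s : ℕ} (hs : s ≤ n) :
      (∏ j ∈ Icc (s + 1) n, (γ + j)) / (n - s).factorial = Ring.choose (γ + n) (n - s) := by
    obtain ⟨d, rfl⟩ := Nat.exists_eq_add_of_le hs
    rw [prod_Icc_add_natCast, Nat.add_sub_cancel_left, mul_div_cancel_left₀ _ (by positivity)]
  rw [jacP, jacobiForm, Nat.sum_antidiagonal_eq_sum_range_succ_mk]
  congr 1
  refine sum_congr rfl fun s hs ↦ ?_
  have hsn : s ≤ n := Nat.lt_succ_iff.mp (mem_range.mp hs)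
  have hβ := prod_div_factorial β (n.sub_le s)
  rw [Nat.sub_sub_self hsn] at hβ
  rw [prod_div_factorial α hsn, hβ]

theorem jacP_contiguous (n : ℕ) (α β x : ℝ) (hdef : poch (n + α + β + 1) n ≠ 0) :
    (α + n) * jacP n (α - 1) (β + 1) x =
      α * jacP n α β x + n * (x - 1) * jacP (n - 1) (α + 1) (β + 1) x := by
  rcases n with _ | n
  · simp [jacP, poch]
  have form := jacobiForm_contiguous n α β ((x - 1) / 2) ((x + 1) / 2)
  have shift : (n : ℝ) + (α + 1) + (β + 1) + 1 = (n + 1 : ℕ) + α + β + 1 + 1 := by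
    push_cast; ring
  have shift' : ((n + 1 : ℕ) : ℝ) + (α - 1) + (β + 1) + 1 = (n + 1 : ℕ) + α + β + 1 := by ring
  rw [poch_succ_left] at hdef
  obtain ⟨hfirst, hrest⟩ := mul_ne_zero_iff.mp hdef
  simp only [jacP_eq_jacobiForm, Nat.add_sub_cancel, shift, shift', poch_succ_left, pow_succ,
    Nat.factorial_succ]
  push_cast at hfirst hrest ⊢
  field_simp
  linear_combination 2 * form

theorem mul_jacII (m n : ℕ) (α β x : ℝ) (hα : α + n - m ≠ 0)
    (hdef : poch (m + -α + β + 1) m ≠ 0) :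
    (α + n - m) * jacII m n α β x =
      n * (x - 1) * jacP m (-α) β x * jacP (n - 1) (α + 1) (β + 1) x +
        (α - m) * jacP m (-α - 1) (β + 1) x * jacP n α β x := by
  have contiguous := jacP_contiguous m (-α) β x hdef
  have cancel : (α + n - m) * (1 / (m - n - α)) = -1 := by
    rw [show (m : ℝ) - n - α = -(α + n - m) by ring]
    field_simp
  rw [jacII, ← mul_assoc, cancel]
  linear_combination jacP n α β x * contiguous

theorem stmt11 (m n : ℕ) (hm : 1 ≤ m) (hn : m ≤ n) (α β : ℝ)
    (h : α + 1 + (n : ℝ) - 2 * (m : ℝ) ≠ 0)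
    (h1 : poch ((m : ℝ) + (-α - 1) + (β - 1) + 1) m ≠ 0)
    (h2 : poch (((n - m - 1 : ℕ) : ℝ) + (α + 2) + β + 1) (n - m - 1) ≠ 0)
    (h3 : poch ((m : ℝ) + (-α - 2) + β + 1) m ≠ 0)
    (h4 : poch (((n - m : ℕ) : ℝ) + (α + 1) + (β - 1) + 1) (n - m) ≠ 0)
    (h5 : poch (((m - 1 : ℕ) : ℝ) + -α + β + 1) (m - 1) ≠ 0) (x : ℝ) :
    ((n : ℝ) - (m : ℝ)) * (x - 1) * jacP m (-α - 1) (β - 1) x * jacP (n - m - 1) (α + 2) β x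
        + (α + 1 - (m : ℝ)) * jacP m (-α - 2) β x * jacP (n - m) (α + 1) (β - 1) x
      = (α + 1 + (n : ℝ) - 2 * (m : ℝ)) * jacII m (n - m) (α + 1) (β - 1) x := by
  have hdegree : α + 1 + ((n - m : ℕ) : ℝ) - m = α + 1 + n - 2 * m := by
    push_cast [hn]; ring
  have hneg : -(α + 1) = -α - 1 := by ring
  have identity := mul_jacII m (n - m) (α + 1) (β - 1) x (by rwa [hdegree]) (by rwa [hneg])
  rw [hdegree, hneg, Nat.cast_sub hn, sub_add_cancel, add_assoc α 1 1, one_add_one_eq_two,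
    sub_sub, one_add_one_eq_two] at identity
  exact identity.symm
end

section
/- Let m ∈ ℕ, n ≥ m+2 an integer and α ∈ ℝ. Then for every x ∈ ℝ, L̂^{(III,m)}_n(x;α) = (−1)^{m+1} [(n−m−1) x L_m^{(−α)}(−x) L_{n−m−2}^{(α+1)}(x) + L_{m+1}^{(−α−1)}(−x) L_{n−m−1}^{(α)}(x)]. -/
open Finset Filter Topology

/-!
With `D = d/dx`, one has `D (x^α e^{-x} L_n^{(α)}) = -x^{α-1} e^{-x} L_{n+1}^{(α-1)}`, that is
`L_{n+1}^{(α-1)} = (x - α) L_n^{(α)} - x D L_n^{(α)}`, where `D L_n^{(α)} = n L_{n-1}^{(α+1)}`.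
Applied to `L_{n-m}^{(α-1)}(x)` and to `L_{m+1}^{(-α-1)}(-x)`, this rewrites both sides of the
identity in terms of `L_m^{(-α)}(-x)`, `L_{n-m-1}^{(α)}(x)` and their derivatives; the
coefficients `x - α` and `-x + α` are opposite, so the two sides agree.
-/

open Polynomial

section AscPochhammer

variable {R : Type*} [CommSemiring R]

lemma ascPochhammer_succ_eval_left (n : ℕ) (a : R) :
    (ascPochhammer R (n + 1)).eval a = a * (ascPochhammer R n).eval (a + 1) := by
  simp [ascPochhammer_succ_left, eval_comp]

lemma prod_Icc_add_eq_ascPochhammer_eval (k d : ℕ) (a : R) :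
    ∏ j ∈ Icc (k + 1) (k + d), (a + (j : R)) = (ascPochhammer R d).eval (a + k + 1) := by
  induction d with
  | zero => simp
  | succ d ih =>
    rw [← add_assoc, prod_Icc_succ_top (by omega), ih, ascPochhammer_succ_eval]
    push_cast
    ring

end AscPochhammer

section MonicLaguerre

variable {R : Type*} [CommRing R]

/-- The monic Laguerre polynomial `L_n^{(a)}` over a commutative ring. Its coefficients are written
with `n.choose k` and a rising factorial, so that no division is needed. -/
noncomputable def monicLaguerre (n : ℕ) (a : R) : R[X] :=
  ∑ k ∈ range (n + 1),
    C ((-1) ^ (n - k) * (n.choose k : R) * (ascPochhammer R (n - k)).eval (a + k + 1)) * X ^ k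

lemma coeff_monicLaguerre (n k : ℕ) (a : R) :
    (monicLaguerre n a).coeff k =
      (-1) ^ (n - k) * (n.choose k : R) * (ascPochhammer R (n - k)).eval (a + k + 1) := by
  simp only [monicLaguerre, finsetSum_coeff, coeff_C_mul_X_pow, sum_ite_eq, mem_range]
  split_ifs with hk
  · rfl
  · simp [Nat.choose_eq_zero_of_lt (by omega : n < k)]

lemma add_mul_coeff_monicLaguerre (n k : ℕ) (a : R) :
    (a + k) * (monicLaguerre n a).coeff k =
      -((-1) ^ (n + 1 - k) * (n.choose k : R) * (ascPochhammer R (n + 1 - k)).eval (a + k)) := by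
  rw [coeff_monicLaguerre]
  rcases le_or_gt k n with hk | hk
  · rw [Nat.sub_add_comm hk, ascPochhammer_succ_eval_left]
    ring
  · simp [Nat.choose_eq_zero_of_lt hk]

lemma coeff_zero_monicLaguerre_succ_sub_one (n : ℕ) (a : R) :
    (monicLaguerre (n + 1) (a - 1)).coeff 0 = -(a * (monicLaguerre n a).coeff 0) := by
  have absorb := add_mul_coeff_monicLaguerre n 0 a
  rw [coeff_monicLaguerre]
  simp only [Nat.cast_zero, add_zero, Nat.choose_zero_right] at absorb ⊢
  rw [absorb, sub_add_cancel, neg_neg]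

lemma coeff_succ_monicLaguerre_succ_sub_one (n k : ℕ) (a : R) :
    (monicLaguerre (n + 1) (a - 1)).coeff (k + 1) =
      (monicLaguerre n a).coeff k - (a + (k + 1 : ℕ)) * (monicLaguerre n a).coeff (k + 1) := by
  rw [add_mul_coeff_monicLaguerre, coeff_monicLaguerre, coeff_monicLaguerre,
    Nat.add_sub_add_right, Nat.choose_succ_succ', Nat.cast_add, Nat.cast_succ,
    show a - 1 + (k + 1) + 1 = a + k + 1 by ring, ← add_assoc a]
  ring

lemma monicLaguerre_succ_sub_one (n : ℕ) (a : R) :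
    monicLaguerre (n + 1) (a - 1) =
      (X - C a) * monicLaguerre n a - X * derivative (monicLaguerre n a) := by
  ext (_ | k)
  · simp [coeff_zero_monicLaguerre_succ_sub_one, sub_mul]
  · simp only [coeff_succ_monicLaguerre_succ_sub_one, sub_mul, coeff_sub, coeff_X_mul, coeff_C_mul,
      coeff_derivative]
    push_cast
    ring

lemma derivative_monicLaguerre (n : ℕ) (a : R) :
    derivative (monicLaguerre n a) = C (n : R) * monicLaguerre (n - 1) (a + 1) := by
  rcases n with _ | n
  · simp [monicLaguerre]
  ext k
  have absorb : ((n + 1 : ℕ) : R) * n.choose k = (n + 1).choose (k + 1) * (k + 1) := by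
    exact_mod_cast congrArg (Nat.cast (R := R)) (Nat.add_one_mul_choose_eq n k)
  rw [coeff_derivative, coeff_C_mul, coeff_monicLaguerre, coeff_monicLaguerre,
    Nat.add_sub_cancel, Nat.add_sub_add_right,
    show a + (k + 1 : ℕ) + 1 = a + 1 + k + 1 by push_cast; ring]
  linear_combination
    -((-1) ^ (n - k) * (ascPochhammer R (n - k)).eval (a + 1 + k + 1)) * absorb

end MonicLaguerre

lemma lagP_eq_eval_monicLaguerre (n : ℕ) (α x : ℝ) :
    lagP n α x = (monicLaguerre n α).eval x := by
  simp only [lagP, monicLaguerre, eval_finsetSum, eval_mul, eval_C, eval_pow, eval_X]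
  refine sum_congr rfl fun k hk => ?_
  obtain ⟨d, rfl⟩ := Nat.exists_eq_add_of_le (Nat.lt_succ_iff.mp (mem_range.mp hk))
  rw [prod_Icc_add_eq_ascPochhammer_eval, Nat.cast_add_choose, Nat.add_sub_cancel_left]
  field_simp

lemma lagP_succ_sub_one (n : ℕ) (α x : ℝ) :
    lagP (n + 1) (α - 1) x = (x - α) * lagP n α x - n * x * lagP (n - 1) (α + 1) x := by
  simp only [lagP_eq_eval_monicLaguerre, monicLaguerre_succ_sub_one, derivative_monicLaguerre,
    eval_sub, eval_mul, eval_X, eval_C]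
  ring

theorem stmt12 (m n : ℕ) (hn : m + 2 ≤ n) (α x : ℝ) :
    lagIII m n α x
      = (-1 : ℝ) ^ (m + 1) *
          (((n : ℝ) - (m : ℝ) - 1) * x * lagP m (-α) (-x) * lagP (n - m - 2) (α + 1) x
            + lagP (m + 1) (-α - 1) (-x) * lagP (n - m - 1) α x) := by
  obtain ⟨p, rfl⟩ : ∃ p, n = m + (p + 2) := ⟨n - m - 2, by omega⟩
  have raise_right : lagP (p + 2) (α - 1) x =
      (x - α) * lagP (p + 1) α x - (p + 1 : ℕ) * x * lagP p (α + 1) x :=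
    lagP_succ_sub_one (p + 1) α x
  have raise_left : lagP (m + 1) (-α - 1) (-x) =
      (-x - -α) * lagP m (-α) (-x) - m * -x * lagP (m - 1) (-α + 1) (-x) :=
    lagP_succ_sub_one m (-α) (-x)
  have hn_ne_zero : m + (p + 2) ≠ 0 := by omega
  rw [lagIII, if_neg hn_ne_zero, Nat.add_sub_cancel_left, Nat.add_sub_cancel,
    show p + 2 - 1 = p + 1 from rfl, raise_right, raise_left]
  push_cast
  ring
end
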